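/- arXiv:math/0212179 — 2 statements merged into one kernel-verified Lean document; each statement's English description precedes it below -/
import Mathlib

section
/- Under the hypotheses of the Condition Number Theorem, suppose moreover that A_1 = ⋯ = A_n = A and C_1 = ⋯ = C_n = C, where Conv(A) has dimension n. Let (p,q) ∈ ℝⁿ×ℝⁿ, z := exp(p+iq), and let f ∈ ℱ satisfy f(z) = 0, ‖f^i‖_{C⁻¹} = 1 for every i, and D̂(f) invertible. Then 1/d_ℙ(f, Σ_{(p,q)}) = sup_{‖ḟ‖≤1} ‖DG_f ḟ‖_A, i.e. the lower and upper bounds of the Condition Number Theorem coincide. -/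
open MeasureTheory Finset
open scoped ENNReal Pointwise

noncomputable section

namespace SparseRandom

variable {n : ℕ}

/-- `exp(p+iq) ∈ (ℂ*)ⁿ` in logarithmic coordinates. -/
def zexp (p q : Fin n → ℝ) : Fin n → ℂ :=
  fun j => Complex.exp ((p j : ℂ) + (q j : ℂ) * Complex.I)

/-- The (Laurent) monomial `z^a` for an integer exponent vector `a`. -/
def mono (z : Fin n → ℂ) (a : Fin n → ℤ) : ℂ := ∏ j, z j ^ (a j)

/-- Evaluation of the polynomial with support `A` and coefficient vector `f` at `z`. -/
def evalP {A : Finset (Fin n → ℤ)} (f : A → ℂ) (z : Fin n → ℂ) : ℂ :=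
  ∑ a : A, f a * mono z (a : Fin n → ℤ)

/-- The squared weighted norm `‖f‖²_{C⁻¹} = ∑_a |f_a|²/c_a`. -/
def nsq {A : Finset (Fin n → ℤ)} (c : (Fin n → ℤ) → ℝ) (f : A → ℂ) : ℝ :=
  ∑ a : A, Complex.normSq (f a) / c (a : Fin n → ℤ)

/-- The Gaussian probability measure `γ = ⊗ᵢ γ_{Aᵢ,Cᵢ}` on the system space
`ℱ = Πᵢ ℱ_ℂ(Aᵢ)`, given by its density w.r.t. Lebesgue measure. -/
def gauss (A : Fin n → Finset (Fin n → ℤ)) (c : Fin n → (Fin n → ℤ) → ℝ) :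
    Measure ((i : Fin n) → (A i) → ℂ) :=
  volume.withDensity fun f => ENNReal.ofReal
    (∏ i, (((2 * Real.pi) ^ (A i).card)⁻¹ * (∏ a : A i, c i (a : Fin n → ℤ))⁻¹ *
      Real.exp (- nsq (c i) (f i) / 2)))

/-- `z` is a common root of the system `f`. -/
def isRootAt (A : Fin n → Finset (Fin n → ℤ)) (f : (i : Fin n) → (A i) → ℂ)
    (z : Fin n → ℂ) : Prop :=
  ∀ i, evalP (f i) z = 0

/-- The Jacobian matrix `(∂f^i/∂x_j)` of the system `f` at a point `z ∈ (ℂ*)ⁿ`. -/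
def jac (A : Fin n → Finset (Fin n → ℤ)) (f : (i : Fin n) → (A i) → ℂ)
    (z : Fin n → ℂ) : Matrix (Fin n) (Fin n) ℂ :=
  Matrix.of fun i j => ∑ a : A i, f i a * ((a : Fin n → ℤ) j : ℂ) * mono z (a : Fin n → ℤ) / z j

/-- The matrix `D̂(f)_{ij} = z_j ∂f^i/∂x_j(z)`, i.e. the derivative of the system in the
logarithmic variable `p+iq`. -/
def Dhat (A : Fin n → Finset (Fin n → ℤ)) (f : (i : Fin n) → (A i) → ℂ)
    (z : Fin n → ℂ) : Matrix (Fin n) (Fin n) ℂ :=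
  Matrix.of fun i j => ∑ a : A i, f i a * ((a : Fin n → ℤ) j : ℂ) * mono z (a : Fin n → ℤ)

/-- `Σ_{(p,q)}`: systems with `exp(p+iq)` as a degenerate root. -/
def SigmaPQ (A : Fin n → Finset (Fin n → ℤ)) (p q : Fin n → ℝ) :
    Set ((i : Fin n) → (A i) → ℂ) :=
  {g | isRootAt A g (zexp p q) ∧ (jac A g (zexp p q)).det = 0}

/-- Multiprojective distance `d_ℙ(f,g)`. -/
def dP (c : Fin n → (Fin n → ℤ) → ℝ) {A : Fin n → Finset (Fin n → ℤ)}
    (f g : (i : Fin n) → (A i) → ℂ) : ℝ :=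
  Real.sqrt (∑ i, (⨅ lam : ℂ, nsq (c i) (fun a => f i a - lam * g i a)) / nsq (c i) (f i))

/-- Distance from `f` to a set `S` of systems. -/
def dPS (c : Fin n → (Fin n → ℤ) → ℝ) {A : Fin n → Finset (Fin n → ℤ)}
    (f : (i : Fin n) → (A i) → ℂ) (S : Set ((i : Fin n) → (A i) → ℂ)) : ℝ :=
  sInf ((dP c f) '' S)

/-- The image of `A ⊂ ℤⁿ` in `ℝⁿ`. -/
def coeA (A : Finset (Fin n → ℤ)) : Set (Fin n → ℝ) :=
  (fun (a : Fin n → ℤ) (j : Fin n) => (a j : ℝ)) '' (A : Set (Fin n → ℤ))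

/-- The Kähler potential `g_A(p) = ½ log ∑_{a∈A} c_a e^{2⟨a,p⟩}`. -/
def gA (A : Finset (Fin n → ℤ)) (c : (Fin n → ℤ) → ℝ) (p : Fin n → ℝ) : ℝ :=
  (1 / 2) * Real.log (∑ a : A, c (a : Fin n → ℤ) * Real.exp (2 * ∑ j, ((a : Fin n → ℤ) j : ℝ) * p j))

/-- `H_A(p) = ½ ∇² g_A(p)`, half the Hessian of the Kähler potential. -/
def HessA (A : Finset (Fin n → ℤ)) (c : (Fin n → ℤ) → ℝ) (p : Fin n → ℝ) :
    Matrix (Fin n) (Fin n) ℝ :=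
  Matrix.of fun j k =>
    (1 / 2) * fderiv ℝ (fun x => fderiv ℝ (gA A c) x (Pi.single j 1)) p (Pi.single k 1)

/-- The mixed integrand `I(p)`, the coefficient of the volume form in
`(−1)^{n(n−1)/2} ω_{A_1} ∧ ⋯ ∧ ω_{A_n}`. -/
def mixedI (A : Fin n → Finset (Fin n → ℤ)) (c : Fin n → (Fin n → ℤ) → ℝ)
    (p : Fin n → ℝ) : ℝ :=
  ∑ σ : Equiv.Perm (Fin n), ∑ τ : Equiv.Perm (Fin n),
    ((Equiv.Perm.sign σ : ℤ) : ℝ) * ((Equiv.Perm.sign τ : ℤ) : ℝ) *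
      ∏ i, HessA (A i) (c i) p (σ i) (τ i)

end SparseRandom

namespace SparseRandom

variable {n : ℕ}

/-- The norm `‖u‖_A` on `ℂⁿ` induced by the Hermitian form `uᴴ·H_A(p)·u`. -/
def normA (H : Matrix (Fin n) (Fin n) ℝ) (u : Fin n → ℂ) : ℝ :=
  Real.sqrt ((∑ j, ∑ k, (starRingEnd ℂ) (u j) * (H j k : ℂ) * u k).re)

/-- The condition map `DG_f : ḟ ↦ D̂(f)⁻¹·(ḟ¹(z),…,ḟⁿ(z))ᵀ`. -/
def DG (A : Fin n → Finset (Fin n → ℤ)) (f : (i : Fin n) → (A i) → ℂ)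
    (z : Fin n → ℂ) (df : (i : Fin n) → (A i) → ℂ) : Fin n → ℂ :=
  (Dhat A f z)⁻¹.mulVec fun i => evalP (df i) z

/-- The norm `‖ḟ‖ = (∑ᵢ ‖ḟ^i‖²_{Cᵢ⁻¹})^{1/2}` on the system space. -/
def normSys (c : Fin n → (Fin n → ℤ) → ℝ) {A : Fin n → Finset (Fin n → ℤ)}
    (df : (i : Fin n) → (A i) → ℂ) : ℝ :=
  Real.sqrt (∑ i, nsq (c i) (df i))

end SparseRandom


namespace SparseRandom

section generic
variable {ι : Type*} [Fintype ι] {E : Type*} [NormedAddCommGroup E] [NormedSpace ℝ E]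

theorem hasFDerivAt_expsum (k : ι → ℝ) (l : ι → E →L[ℝ] ℝ) (x : E) :
    HasFDerivAt (fun x => ∑ a, k a * Real.exp (2 * l a x))
      (∑ a, (k a * Real.exp (2 * l a x) * 2) • l a) x := by
  apply HasFDerivAt.fun_sum
  intro a _
  have h := (((l a).hasFDerivAt (x := x)).const_mul 2).exp.const_mul (k a)
  refine h.congr_fderiv ?_
  ext v
  simp only [_root_.smul_apply, smul_eq_mul]
  ring

theorem fderiv_logsum [Nonempty ι] (k : ι → ℝ) (hk : ∀ a, 0 < k a) (l : ι → E →L[ℝ] ℝ) (x v : E) :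
    fderiv ℝ (fun x => (1 / 2) * Real.log (∑ a, k a * Real.exp (2 * l a x))) x v =
      (∑ a, (k a * l a v) * Real.exp (2 * l a x)) / (∑ a, k a * Real.exp (2 * l a x)) := by
  have hS : (∑ a, k a * Real.exp (2 * l a x)) ≠ 0 :=
    (Finset.sum_pos (fun a _ => mul_pos (hk a) (Real.exp_pos _)) Finset.univ_nonempty).ne'
  have h := ((hasFDerivAt_expsum k l x).log hS).const_mul (1 / 2)
  rw [h.fderiv]
  simp only [_root_.smul_apply, _root_.sum_apply, smul_eq_mul]
  have e : ∑ a, k a * Real.exp (2 * l a x) * 2 * l a v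
      = 2 * ∑ a, (k a * l a v) * Real.exp (2 * l a x) := by
    rw [Finset.mul_sum]; exact Finset.sum_congr rfl fun a _ => by ring
  rw [e]
  field_simp

theorem fderiv2_logsum [Nonempty ι] (k : ι → ℝ) (hk : ∀ a, 0 < k a) (l : ι → E →L[ℝ] ℝ)
    (x v w : E) :
    fderiv ℝ (fun y => fderiv ℝ
        (fun x => (1 / 2) * Real.log (∑ a, k a * Real.exp (2 * l a x))) y v) x w =
      2 * ((∑ a, k a * Real.exp (2 * l a x) * (l a v * l a w)) / (∑ a, k a * Real.exp (2 * l a x))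
        - (∑ a, k a * Real.exp (2 * l a x) * l a v) / (∑ a, k a * Real.exp (2 * l a x)) *
          ((∑ a, k a * Real.exp (2 * l a x) * l a w) / (∑ a, k a * Real.exp (2 * l a x)))) := by
  have hS : (∑ a, k a * Real.exp (2 * l a x)) ≠ 0 :=
    (Finset.sum_pos (fun a _ => mul_pos (hk a) (Real.exp_pos _)) Finset.univ_nonempty).ne'
  simp only [fderiv_logsum k hk l]
  have h := ((hasFDerivAt_expsum (fun a => k a * l a v) l x).mul
    ((hasDerivAt_inv hS).comp_hasFDerivAt x (hasFDerivAt_expsum k l x)))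
  have h' : fderiv ℝ (fun y => (∑ a, (k a * l a v) * Real.exp (2 * l a y)) /
      (∑ a, k a * Real.exp (2 * l a y))) x = _ := h.fderiv
  rw [h']
  have e1 : ∑ a, (k a * l a v) * Real.exp (2 * l a x) * 2 * l a w
      = 2 * ∑ a, k a * Real.exp (2 * l a x) * (l a v * l a w) := by
    rw [Finset.mul_sum]; exact Finset.sum_congr rfl fun a _ => by ring
  have e2 : ∑ a, k a * Real.exp (2 * l a x) * 2 * l a w
      = 2 * ∑ a, k a * Real.exp (2 * l a x) * l a w := by
    rw [Finset.mul_sum]; exact Finset.sum_congr rfl fun a _ => by ring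
  have e3 : ∑ a, (k a * l a v) * Real.exp (2 * l a x)
      = ∑ a, k a * Real.exp (2 * l a x) * l a v :=
    Finset.sum_congr rfl fun a _ => by ring
  simp only [_root_.smul_apply, _root_.add_apply,
    _root_.sum_apply, smul_eq_mul, e1, e2, e3, Function.comp_def]
  field_simp
  ring

/-- weighted Cauchy–Schwarz -/
theorem weighted_cs (k : ι → ℝ) (hk : ∀ a, 0 < k a) (e y : ι → ℂ) :
    Complex.normSq (∑ a, e a * y a) ≤
      (∑ a, Complex.normSq (e a) / k a) * ∑ a, k a * Complex.normSq (y a) := by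
  have h1 : ‖∑ a, e a * y a‖ ≤ ∑ a, ‖e a‖ * ‖y a‖ := by
    refine (norm_sum_le _ _).trans (le_of_eq ?_)
    simp
  rw [Complex.normSq_eq_norm_sq]
  refine (pow_le_pow_left₀ (norm_nonneg _) h1 2).trans ?_
  apply Finset.sum_sq_le_sum_mul_sum_of_sq_le_mul
  · intro a _; exact div_nonneg (Complex.normSq_nonneg _) (hk a).le
  · intro a _; exact mul_nonneg (hk a).le (Complex.normSq_nonneg _)
  · intro a _
    have := (hk a).ne'
    rw [Complex.normSq_eq_norm_sq, Complex.normSq_eq_norm_sq]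
    apply le_of_eq
    field_simp

/-- Hermitian variance identity. -/
theorem variance_id {n : ℕ} (W : ι → ℝ) (S : ℝ) (hS : S = ∑ a, W a) (hS0 : S ≠ 0)
    (al : ι → Fin n → ℝ) (u : Fin n → ℂ) (H : Matrix (Fin n) (Fin n) ℝ)
    (hH : ∀ j k, H j k = (∑ a, W a * (al a j * al a k)) / S
        - (∑ a, W a * al a j) / S * ((∑ a, W a * al a k) / S)) :
    (∑ j, ∑ k, (starRingEnd ℂ) (u j) * (H j k : ℂ) * u k).re =
      (∑ a, W a * Complex.normSq ((∑ j, (al a j : ℂ) * u j)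
        - ∑ j, (((∑ a, W a * al a j) / S : ℝ) : ℂ) * u j)) / S := by
  set L : ι → ℂ := fun a => ∑ j, (al a j : ℂ) * u j with hL
  set m : Fin n → ℝ := fun j => (∑ a, W a * al a j) / S with hm
  set Lm : ℂ := ∑ j, (m j : ℂ) * u j with hLm
  have hSc : (S : ℂ) ≠ 0 := by exact_mod_cast hS0
  have hLL : ∑ a, (W a : ℂ) * L a = S * Lm := by
    simp only [hL, hLm, hm, Finset.mul_sum]
    rw [Finset.sum_comm]
    refine Finset.sum_congr rfl fun j _ => ?_
    push_cast
    field_simp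
    rw [Finset.mul_sum]
    refine Finset.sum_congr rfl fun a _ => ?_
    ring
  have hLLc : ∑ a, (W a : ℂ) * (starRingEnd ℂ) (L a) = S * (starRingEnd ℂ) Lm := by
    have := congrArg (starRingEnd ℂ) hLL
    simpa [map_sum] using this
  have key : (∑ j, ∑ k, (starRingEnd ℂ) (u j) * (H j k : ℂ) * u k) =
      (∑ a, (W a : ℂ) * ((starRingEnd ℂ) (L a) * L a)) / S - (starRingEnd ℂ) Lm * Lm := by
    have a1 : (starRingEnd ℂ) Lm * Lm = ∑ j, ∑ k, (starRingEnd ℂ) (u j) * ((m j : ℂ) * m k) * u k := by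
      simp only [hLm, map_sum, map_mul, Complex.conj_ofReal, Finset.sum_mul_sum]
      refine Finset.sum_congr rfl fun j _ => Finset.sum_congr rfl fun k _ => ?_
      ring
    have a2 : (∑ a, (W a : ℂ) * ((starRingEnd ℂ) (L a) * L a)) / S =
        ∑ j, ∑ k, (starRingEnd ℂ) (u j) * ((∑ a, (W a : ℂ) * ((al a j : ℂ) * al a k)) / S) * u k := by
      simp only [hL, map_sum, map_mul, Complex.conj_ofReal, Finset.sum_mul_sum]
      simp only [Finset.mul_sum,
        Finset.sum_div, Finset.sum_mul]
      rw [Finset.sum_comm]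
      refine Finset.sum_congr rfl fun j _ => ?_
      rw [Finset.sum_comm]
      refine Finset.sum_congr rfl fun k _ => ?_
      refine Finset.sum_congr rfl fun a _ => ?_
      ring
    rw [a1, a2, ← Finset.sum_sub_distrib]
    refine Finset.sum_congr rfl fun j _ => ?_
    rw [← Finset.sum_sub_distrib]
    refine Finset.sum_congr rfl fun k _ => ?_
    rw [hH]
    simp only [hm]
    push_cast
    ring
  have key2 : ((∑ a, W a * Complex.normSq (L a - Lm) : ℝ) : ℂ) / S =
      (∑ a, (W a : ℂ) * ((starRingEnd ℂ) (L a) * L a)) / S - (starRingEnd ℂ) Lm * Lm := by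
    push_cast
    have : ∀ a, (W a : ℂ) * (Complex.normSq (L a - Lm) : ℂ) =
        (W a : ℂ) * ((starRingEnd ℂ) (L a) * L a) - (starRingEnd ℂ) Lm * (W a * L a)
          - Lm * (W a * (starRingEnd ℂ) (L a)) + W a * ((starRingEnd ℂ) Lm * Lm) := by
      intro a
      rw [Complex.normSq_eq_conj_mul_self, map_sub]
      ring
    simp only [this, Finset.sum_add_distrib, Finset.sum_sub_distrib, ← Finset.mul_sum,
      ← Finset.sum_mul, hLL, hLLc]
    have : ∑ a, (W a : ℂ) = S := by rw [hS]; push_cast; rfl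
    rw [this]
    field_simp
    ring
  rw [key, ← key2, ← Complex.ofReal_div, Complex.ofReal_re]

end generic

variable {n : ℕ}

theorem zexp_ne (p q : Fin n → ℝ) (j : Fin n) : zexp p q j ≠ 0 := Complex.exp_ne_zero _

theorem normSq_mono (p q : Fin n → ℝ) (a : Fin n → ℤ) :
    Complex.normSq (mono (zexp p q) a) = Real.exp (2 * ∑ j, (a j : ℝ) * p j) := by
  rw [Complex.normSq_eq_norm_sq, mono, norm_prod, two_mul, Real.exp_add, ← sq, Real.exp_sum]
  congr 1
  refine Finset.prod_congr rfl fun j _ => ?_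
  rw [norm_zpow, zexp, Complex.norm_exp]
  simp only [Complex.add_re, Complex.ofReal_re, Complex.mul_re, Complex.I_re, Complex.I_im,
    Complex.ofReal_im, mul_zero, mul_one, sub_zero, add_zero, zero_mul]
  rw [mul_comm, Real.exp_mul, Real.rpow_intCast]

theorem jac_det (A : Fin n → Finset (Fin n → ℤ)) (g : (i : Fin n) → (A i) → ℂ)
    (z : Fin n → ℂ) (hz : ∀ j, z j ≠ 0) : (jac A g z).det = 0 ↔ (Dhat A g z).det = 0 := by
  have : jac A g z = Dhat A g z * Matrix.diagonal (fun j => (z j)⁻¹) := by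
    ext i j
    simp [jac, Dhat, Finset.sum_mul, div_eq_mul_inv]
  rw [this, Matrix.det_mul, Matrix.det_diagonal]
  have h : ∏ j, (z j)⁻¹ ≠ 0 := Finset.prod_ne_zero_iff.2 fun j _ => inv_ne_zero (hz j)
  rw [mul_eq_zero, or_iff_left h]

theorem aff_const (A : Finset (Fin n → ℤ)) (hdim : affineSpan ℝ (coeA A) = ⊤)
    (u : Fin n → ℝ) (t : ℝ) (h : ∀ a ∈ A, ∑ j, (a j : ℝ) * u j = t) : u = 0 := by
  have hall : ∀ x : Fin n → ℝ, ∑ j, x j * u j = t := by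
    intro x
    have hx : x ∈ affineSpan ℝ (coeA A) := by rw [hdim]; trivial
    refine affineSpan_induction (p := fun x : Fin n → ℝ => ∑ j, x j * u j = t) hx ?_ ?_
    · rintro x ⟨a, ha, rfl⟩
      exact h a ha
    · intro s x y z hx hy hz
      simp only [vsub_eq_sub, vadd_eq_add, Pi.add_apply, Pi.smul_apply, Pi.sub_apply, smul_eq_mul]
      simp only [add_mul, mul_assoc, sub_mul, Finset.sum_add_distrib, ← Finset.mul_sum,
        Finset.sum_sub_distrib, hx, hy, hz]
      ring
  have h0 := hall 0
  simp at h0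
  ext j
  have := hall (Pi.single j 1)
  simp [Pi.single_apply] at this
  simp [this, ← h0]

theorem aff_const_complex (A : Finset (Fin n → ℤ)) (hdim : affineSpan ℝ (coeA A) = ⊤)
    (u : Fin n → ℂ) (t : ℂ) (h : ∀ a ∈ A, ∑ j, (a j : ℂ) * u j = t) : u = 0 := by
  have h1 := aff_const A hdim (fun j => (u j).re) t.re (fun a ha => by
    rw [← h a ha]; simp)
  have h2 := aff_const A hdim (fun j => (u j).im) t.im (fun a ha => by
    rw [← h a ha]; simp)
  ext j
  exact Complex.ext (congrFun h1 j) (congrFun h2 j)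

/-- The centered Hermitian form. -/
theorem exists_center (A : Finset (Fin n → ℤ)) [Nonempty A]
    (hdim : affineSpan ℝ (coeA A) = ⊤)
    (c : (Fin n → ℤ) → ℝ) (hc : ∀ a ∈ A, 0 < c a) (p q : Fin n → ℝ) (u : Fin n → ℂ) :
    ∃ m : ℂ, (∑ a : A, (c a : ℂ) * (Complex.normSq (mono (zexp p q) a) : ℂ) *
        ((∑ j, ((a : Fin n → ℤ) j : ℂ) * u j) - m) = 0) ∧
      normA (HessA A c p) u = Real.sqrt ((∑ a : A, c a * Complex.normSq
          (((∑ j, ((a : Fin n → ℤ) j : ℂ) * u j) - m) * mono (zexp p q) a))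
        / (∑ a : A, c a * Complex.normSq (mono (zexp p q) a))) ∧
      (u ≠ 0 → 0 < ∑ a : A, c a * Complex.normSq
          (((∑ j, ((a : Fin n → ℤ) j : ℂ) * u j) - m) * mono (zexp p q) a)) := by
  have hc' : ∀ a : A, 0 < c a := fun a => hc a a.2
  let W : A → ℝ := fun a => c a * Complex.normSq (mono (zexp p q) a)
  let al : A → Fin n → ℝ := fun a j => ((a : Fin n → ℤ) j : ℝ)
  have hW : ∀ a, 0 < W a := fun a => by
    simp only [W, normSq_mono]; exact mul_pos (hc' a) (Real.exp_pos _)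
  have hS : 0 < ∑ a, W a := Finset.sum_pos (fun a _ => hW a) Finset.univ_nonempty
  have hH : ∀ j k, HessA A c p j k = (∑ a, W a * (al a j * al a k)) / (∑ a, W a)
        - (∑ a, W a * al a j) / (∑ a, W a) * ((∑ a, W a * al a k) / (∑ a, W a)) := by
    intro j k
    let l : A → (Fin n → ℝ) →L[ℝ] ℝ := fun a =>
      ∑ j, al a j • ContinuousLinearMap.proj (R := ℝ) (φ := fun _ : Fin n => ℝ) j
    have hl : ∀ a x, l a x = ∑ j, ((a : Fin n → ℤ) j : ℝ) * x j := by
      intro a x; simp [l, al]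
    have hls : ∀ a j, l a (Pi.single j 1) = al a j := by
      intro a x; simp [hl, al, Pi.single_apply]
    have hg : gA A c = (fun x => (1 / 2) * Real.log (∑ a : A, c a * Real.exp (2 * l a x))) := by
      funext x; simp only [gA, hl]
    have hWl : ∀ a : A, c a * Real.exp (2 * l a p) = W a := by
      intro a; simp only [W, normSq_mono, hl]
    simp only [HessA, Matrix.of_apply]
    rw [hg, fderiv2_logsum (fun a : A => c a) hc' l]
    simp only [hWl, hls]
    ring
  refine ⟨∑ j, (((∑ a, W a * al a j) / (∑ a, W a) : ℝ) : ℂ) * u j, ?_, ?_, ?_⟩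
  · have hSc : (∑ a, (W a : ℂ)) ≠ 0 := by exact_mod_cast hS.ne'
    simp only [mul_sub, Finset.sum_sub_distrib]
    have : ∀ a : A, (c a : ℂ) * (Complex.normSq (mono (zexp p q) a) : ℂ) = (W a : ℂ) := by
      intro a; simp only [W]; push_cast; rfl
    simp only [this, ← Finset.sum_mul]
    rw [sub_eq_zero]
    simp only [Finset.mul_sum]
    rw [Finset.sum_comm]
    refine Finset.sum_congr rfl fun j _ => ?_
    push_cast
    field_simp
    rw [Finset.mul_sum]
    refine Finset.sum_congr rfl fun a _ => ?_
    simp only [al]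
    push_cast
    ring
  · rw [normA, variance_id W _ rfl hS.ne' al u _ hH]
    congr 2
    refine Finset.sum_congr rfl fun a _ => ?_
    simp only [Complex.normSq_mul, W, al]
    push_cast
    ring
  · intro hu
    set m := ∑ j, (((∑ a, W a * al a j) / (∑ a, W a) : ℝ) : ℂ) * u j
    have hnn : ∀ a : A, 0 ≤ c a * Complex.normSq
          (((∑ j, ((a : Fin n → ℤ) j : ℂ) * u j) - m) * mono (zexp p q) a) :=
      fun a => mul_nonneg (hc' a).le (Complex.normSq_nonneg _)
    refine lt_of_le_of_ne (Finset.sum_nonneg fun a _ => hnn a) fun h0 => hu ?_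
    have h1 := (Finset.sum_eq_zero_iff_of_nonneg fun a _ => hnn a).1 h0.symm
    refine aff_const_complex A hdim u m fun a ha => ?_
    have h2 := h1 ⟨a, ha⟩ (Finset.mem_univ _)
    have h3 := hW ⟨a, ha⟩
    simp only [W] at h3
    rw [Complex.normSq_mul, mul_left_comm, mul_eq_zero] at h2
    rcases h2 with h2 | h2
    · exact sub_eq_zero.1 (Complex.normSq_eq_zero.1 h2)
    · exact absurd h2 h3.ne'

end SparseRandom

namespace SparseRandom

variable {n : ℕ}

theorem nsq_nonneg' {A : Finset (Fin n → ℤ)} {c : (Fin n → ℤ) → ℝ} (hc : ∀ a ∈ A, 0 < c a)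
    (g : A → ℂ) : 0 ≤ nsq c g :=
  Finset.sum_nonneg fun a _ => div_nonneg (Complex.normSq_nonneg _) (hc a a.2).le

theorem Dhat_mulVec (A : Finset (Fin n → ℤ)) (g : (i : Fin n) → A → ℂ) (z u : Fin n → ℂ)
    (i : Fin n) : (Dhat (fun _ => A) g z).mulVec u i =
      ∑ a : A, g i a * ((∑ j, ((a : Fin n → ℤ) j : ℂ) * u j) * mono z a) := by
  simp only [Matrix.mulVec, dotProduct, Dhat, Matrix.of_apply, Finset.sum_mul, Finset.mul_sum]
  rw [Finset.sum_comm]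
  refine Finset.sum_congr rfl fun a _ => Finset.sum_congr rfl fun j _ => ?_
  ring

theorem eval_bound {A : Finset (Fin n → ℤ)} {c : (Fin n → ℤ) → ℝ} (hc : ∀ a ∈ A, 0 < c a)
    (g : A → ℂ) (z : Fin n → ℂ) : Complex.normSq (evalP g z) ≤
      nsq c g * ∑ a : A, c a * Complex.normSq (mono z a) :=
  weighted_cs (fun a : A => c a) (fun a => hc a a.2) g (fun a => mono z a)

theorem nsq_dual {A : Finset (Fin n → ℤ)} {c : (Fin n → ℤ) → ℝ} (hc : ∀ a ∈ A, 0 < c a)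
    (t : ℂ) (y : A → ℂ) :
    nsq c (fun a : A => t * ((c a : ℂ) * (starRingEnd ℂ) (y a))) =
      Complex.normSq t * ∑ a : A, c a * Complex.normSq (y a) := by
  rw [nsq, Finset.mul_sum]
  refine Finset.sum_congr rfl fun a _ => ?_
  have := (hc a a.2).ne'
  simp only [Complex.normSq_mul, Complex.normSq_ofReal, Complex.normSq_conj]
  field_simp

theorem sum_dual {A : Finset (Fin n → ℤ)} {c : (Fin n → ℤ) → ℝ}
    (t : ℂ) (y : A → ℂ) :
    ∑ a : A, (t * ((c a : ℂ) * (starRingEnd ℂ) (y a))) * y a =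
      t * ((∑ a : A, c a * Complex.normSq (y a) : ℝ) : ℂ) := by
  push_cast
  rw [Finset.mul_sum]
  refine Finset.sum_congr rfl fun a _ => ?_
  rw [Complex.normSq_eq_conj_mul_self]
  ring

/-- lower bound for the distance -/
theorem part_lower (A : Finset (Fin n → ℤ)) [Nonempty A]
    (hdim : affineSpan ℝ (coeA A) = ⊤)
    (c : (Fin n → ℤ) → ℝ) (hc : ∀ a ∈ A, 0 < c a)
    (p q : Fin n → ℝ) (f : (i : Fin n) → A → ℂ)
    (hroot : ∀ i, evalP (f i) (zexp p q) = 0)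
    (hnorm : ∀ i, nsq c (f i) = 1)
    (hnd : (Dhat (fun _ => A) f (zexp p q)).det ≠ 0)
    (g : (i : Fin n) → A → ℂ) (hg : g ∈ SigmaPQ (fun _ => A) p q) :
    ∃ df : (i : Fin n) → A → ℂ, normSys (A := fun _ => A) (fun _ => c) df ≤ 1 ∧
      0 < normA (HessA A c p) (DG (fun _ => A) f (zexp p q) df) ∧
      1 / normA (HessA A c p) (DG (fun _ => A) f (zexp p q) df) ≤
        dP (A := fun _ => A) (fun _ => c) f g := by
  set z := zexp p q with hz
  obtain ⟨hgr, hgd⟩ := hg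
  rw [jac_det _ _ _ (zexp_ne p q)] at hgd
  obtain ⟨u, hu, hgu⟩ := Matrix.exists_mulVec_eq_zero_iff.2 hgd
  set S := ∑ a : A, c a * Complex.normSq (mono z a) with hSdef
  have hS : 0 < S := Finset.sum_pos (fun a _ => by
    rw [normSq_mono]; exact mul_pos (hc a a.2) (Real.exp_pos _)) Finset.univ_nonempty
  set y := (Dhat (fun _ => A) f z).mulVec u with hy
  have hy0 : y ≠ 0 := fun h => hnd (Matrix.exists_mulVec_eq_zero_iff.1 ⟨u, hu, h⟩)
  set N := ∑ i, Complex.normSq (y i) with hN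
  have hN0 : 0 < N := by
    obtain ⟨i, hi⟩ := Function.ne_iff.1 hy0
    exact Finset.sum_pos' (fun i _ => Complex.normSq_nonneg _)
      ⟨i, Finset.mem_univ _, Complex.normSq_pos.2 hi⟩
  set t : ℝ := Real.sqrt (S / N) with ht
  have ht0 : 0 < t := Real.sqrt_pos.2 (div_pos hS hN0)
  have htt : t * t = S / N := Real.mul_self_sqrt (div_pos hS hN0).le
  have hSc : (S : ℂ) ≠ 0 := by exact_mod_cast hS.ne'
  let df : (i : Fin n) → A → ℂ := fun i a =>
    ((t : ℂ) * y i / S) * ((c a : ℂ) * (starRingEnd ℂ) (mono z a))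
  have hev : ∀ i, evalP (df i) z = (t : ℂ) * y i := by
    intro i
    have := sum_dual (c := c) ((t : ℂ) * y i / S) (fun a : A => mono z a)
    rw [evalP, this, ← hSdef]
    field_simp
  have hDG : DG (fun _ => A) f z df = (t : ℂ) • u := by
    have h1 : (fun i => evalP (df i) z) = (t : ℂ) • y := by
      funext i; simp [hev]
    rw [DG]
    change (Dhat (fun _ => A) f z)⁻¹.mulVec (fun i => evalP (df i) z) = _
    rw [h1, hy, Matrix.mulVec_smul, Matrix.mulVec_mulVec,
      Matrix.nonsing_inv_mul _ (isUnit_iff_ne_zero.2 hnd), Matrix.one_mulVec]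
  obtain ⟨m, hm1, hm2, hm3⟩ := exists_center A hdim c hc p q ((t : ℂ) • u)
  rw [← hz, ← hSdef] at hm2
  have htc : (t : ℂ) ≠ 0 := by exact_mod_cast ht0.ne'
  have hQ := hm3 (smul_ne_zero htc hu)
  set b : A → ℂ := fun a =>
    ((∑ j, ((a : Fin n → ℤ) j : ℂ) * ((t : ℂ) • u) j) - m) * mono z a with hb
  set Q := ∑ a : A, c a * Complex.normSq (b a) with hQdef
  have hQ : 0 < Q := hQ
  have hm2 : normA (HessA A c p) ((t : ℂ) • u) = Real.sqrt (Q / S) := hm2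
  refine ⟨df, ?_, ?_, ?_⟩
  · rw [normSys]
    refine Real.sqrt_le_one.2 ?_
    have h2 : ∀ i, nsq c (df i) = Complex.normSq (y i) / N := by
      intro i
      have := nsq_dual hc ((t : ℂ) * y i / S) (fun a : A => mono z a)
      rw [← hSdef] at this
      rw [this, Complex.normSq_div, Complex.normSq_mul, Complex.normSq_ofReal,
        Complex.normSq_ofReal, htt]
      field_simp
    change ∑ i, nsq c (df i) ≤ 1
    simp only [h2]
    rw [← Finset.sum_div, ← hN, div_self hN0.ne']
  · rw [hDG, hm2]
    exact Real.sqrt_pos.2 (div_pos hQ hS)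
  · rw [hDG, hm2, one_div, ← Real.sqrt_inv, dP]
    apply Real.sqrt_le_sqrt
    have h3 : (Q / S)⁻¹ = ∑ i, Complex.normSq ((t : ℂ) * y i) / Q := by
      rw [← Finset.sum_div]
      simp only [Complex.normSq_mul, Complex.normSq_ofReal, htt]
      rw [← Finset.mul_sum, ← hN]
      field_simp
    rw [h3]
    refine Finset.sum_le_sum fun i _ => ?_
    change _ ≤ _ / nsq c (f i)
    rw [hnorm, div_one]
    refine le_ciInf fun lam => ?_
    rw [div_le_iff₀ hQ]
    have h4 := weighted_cs (fun a : A => c a) (fun a => hc a a.2)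
      (fun a => f i a - lam * g i a) b
    refine le_trans (le_of_eq ?_) h4
    congr 1
    have e1 : ∑ a : A, f i a * mono z a = 0 := hroot i
    have e2 : ∑ a : A, g i a * mono z a = 0 := hgr i
    have e3 : ∑ a : A, g i a * ((∑ j, ((a : Fin n → ℤ) j : ℂ) * u j) * mono z a) = 0 := by
      rw [← Dhat_mulVec, hgu]; rfl
    have e4 : y i = ∑ a : A, f i a * ((∑ j, ((a : Fin n → ℤ) j : ℂ) * u j) * mono z a) := by
      rw [hy, Dhat_mulVec]
    have e5 : ∀ a : A, (f i a - lam * g i a) * b a =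
        t * (f i a * ((∑ j, ((a : Fin n → ℤ) j : ℂ) * u j) * mono z a))
        - lam * t * (g i a * ((∑ j, ((a : Fin n → ℤ) j : ℂ) * u j) * mono z a))
        - m * (f i a * mono z a) + lam * m * (g i a * mono z a) := by
      intro a
      have : ∑ j, ((a : Fin n → ℤ) j : ℂ) * ((t : ℂ) • u) j
          = t * ∑ j, ((a : Fin n → ℤ) j : ℂ) * u j := by
        rw [Finset.mul_sum]
        refine Finset.sum_congr rfl fun j _ => ?_
        simp only [Pi.smul_apply, smul_eq_mul]; ring
      simp only [hb]
      rw [this]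
      ring
    simp only [e5, Finset.sum_add_distrib, Finset.sum_sub_distrib, ← Finset.mul_sum, e1, e2, e3,
      ← e4]
    ring

/-- upper bound for the distance -/
theorem part_upper (A : Finset (Fin n → ℤ)) [Nonempty A]
    (hdim : affineSpan ℝ (coeA A) = ⊤)
    (c : (Fin n → ℤ) → ℝ) (hc : ∀ a ∈ A, 0 < c a)
    (p q : Fin n → ℝ) (f : (i : Fin n) → A → ℂ)
    (hroot : ∀ i, evalP (f i) (zexp p q) = 0)
    (hnorm : ∀ i, nsq c (f i) = 1)
    (hnd : (Dhat (fun _ => A) f (zexp p q)).det ≠ 0)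
    (df : (i : Fin n) → A → ℂ) (hdf : normSys (A := fun _ => A) (fun _ => c) df ≤ 1)
    (hpos : 0 < normA (HessA A c p) (DG (fun _ => A) f (zexp p q) df)) :
    ∃ g ∈ SigmaPQ (fun _ => A) p q, dP (A := fun _ => A) (fun _ => c) f g ≤
      1 / normA (HessA A c p) (DG (fun _ => A) f (zexp p q) df) := by
  set z := zexp p q with hz
  set u := DG (fun _ => A) f z df with hu
  have hu0 : u ≠ 0 := by
    intro h
    rw [h] at hpos
    simp [normA] at hpos
  set S := ∑ a : A, c a * Complex.normSq (mono z a) with hSdef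
  have hS : 0 < S := Finset.sum_pos (fun a _ => by
    rw [normSq_mono]; exact mul_pos (hc a a.2) (Real.exp_pos _)) Finset.univ_nonempty
  let y : Fin n → ℂ := fun i => evalP (df i) z
  have hy : (Dhat (fun _ => A) f z).mulVec u = y := by
    rw [hu, DG, Matrix.mulVec_mulVec,
      Matrix.mul_nonsing_inv _ (isUnit_iff_ne_zero.2 hnd), Matrix.one_mulVec]
  have hyS : ∑ i, Complex.normSq (y i) ≤ S := by
    have h1 : ∑ i, nsq c (df i) ≤ 1 := Real.sqrt_le_one.1 hdf
    calc ∑ i, Complex.normSq (y i) ≤ ∑ i, nsq c (df i) * S :=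
          Finset.sum_le_sum fun i _ => eval_bound hc (df i) z
      _ = (∑ i, nsq c (df i)) * S := by rw [Finset.sum_mul]
      _ ≤ 1 * S := by gcongr
      _ = S := one_mul _
  obtain ⟨m, hm1, hm2, hm3⟩ := exists_center A hdim c hc p q u
  rw [← hz] at hm1
  set b : A → ℂ := fun a =>
    ((∑ j, ((a : Fin n → ℤ) j : ℂ) * u j) - m) * mono z a with hb
  set Q := ∑ a : A, c a * Complex.normSq (b a) with hQdef
  have hQ : 0 < Q := hm3 hu0
  have hm2 : normA (HessA A c p) u = Real.sqrt (Q / S) := hm2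
  have hQc : (Q : ℂ) ≠ 0 := by exact_mod_cast hQ.ne'
  let e : (i : Fin n) → A → ℂ := fun i a => (y i / Q) * ((c a : ℂ) * (starRingEnd ℂ) (b a))
  have he0 : ∀ i, ∑ a : A, e i a * mono z a = 0 := by
    intro i
    have h1 : ∀ a : A, e i a * mono z a = (y i / Q) * (starRingEnd ℂ) ((c a : ℂ) *
        (Complex.normSq (mono z a) : ℂ) * ((∑ j, ((a : Fin n → ℤ) j : ℂ) * u j) - m)) := by
      intro a
      simp only [e, hb, map_mul, Complex.conj_ofReal]
      rw [Complex.normSq_eq_conj_mul_self]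
      ring
    simp only [h1]
    rw [← Finset.mul_sum, ← map_sum, hm1]
    simp
  have heb : ∀ i, ∑ a : A, e i a * ((∑ j, ((a : Fin n → ℤ) j : ℂ) * u j) * mono z a) = y i := by
    intro i
    have h2 := sum_dual (c := c) (y i / Q) b
    rw [← hQdef, div_mul_cancel₀ _ hQc] at h2
    have h1 : ∀ a : A, e i a * ((∑ j, ((a : Fin n → ℤ) j : ℂ) * u j) * mono z a) =
        e i a * b a + m * (e i a * mono z a) := by
      intro a; simp only [hb]; ring
    simp only [h1, Finset.sum_add_distrib, ← Finset.mul_sum, he0]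
    rw [mul_zero, add_zero]
    exact h2
  refine ⟨fun i a => f i a - e i a, ⟨?_, ?_⟩, ?_⟩
  · intro i
    have e1 : ∑ a : A, f i a * mono z a = 0 := hroot i
    change ∑ a : A, (f i a - e i a) * mono z a = 0
    simp only [sub_mul, Finset.sum_sub_distrib, e1, he0, sub_zero]
  · rw [jac_det _ _ _ (zexp_ne p q)]
    refine Matrix.exists_mulVec_eq_zero_iff.1 ⟨u, hu0, ?_⟩
    funext i
    have e4 : y i = ∑ a : A, f i a * ((∑ j, ((a : Fin n → ℤ) j : ℂ) * u j) * mono z a) := by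
      rw [← hy, Dhat_mulVec]
    rw [Dhat_mulVec, ← hz]
    simp only [sub_mul, Finset.sum_sub_distrib, heb, ← e4, sub_self]
    rfl
  · rw [hm2, one_div, ← Real.sqrt_inv, dP]
    apply Real.sqrt_le_sqrt
    have h3 : ∑ i, Complex.normSq (y i) / Q ≤ (Q / S)⁻¹ := by
      rw [← Finset.sum_div, inv_div]
      gcongr
    refine le_trans (Finset.sum_le_sum fun i _ => ?_) h3
    change _ / nsq c (f i) ≤ _
    rw [hnorm, div_one]
    refine (ciInf_le ⟨0, ?_⟩ 1).trans ?_
    · rintro _ ⟨lam, rfl⟩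
      exact nsq_nonneg' hc _
    · have h5 := nsq_dual hc (y i / Q) b
      rw [← hQdef, Complex.normSq_div, Complex.normSq_ofReal] at h5
      have h6 : (fun a => f i a - 1 * (f i a - e i a)) = e i := by
        funext a; ring
      change nsq c (fun a => f i a - 1 * (f i a - e i a)) ≤ _
      rw [h6]
      refine le_of_eq (h5.trans ?_)
      field_simp

theorem part_bdd (A : Finset (Fin n → ℤ)) 
    (c : (Fin n → ℤ) → ℝ) (hc : ∀ a ∈ A, 0 < c a)
    (z : Fin n → ℂ) (H : Matrix (Fin n) (Fin n) ℝ) (f : (i : Fin n) → A → ℂ) :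
    ∃ M, ∀ df : (i : Fin n) → A → ℂ, normSys (A := fun _ => A) (fun _ => c) df ≤ 1 →
      normA H (DG (fun _ => A) f z df) ≤ M := by
  set S := ∑ a : A, c a * Complex.normSq (mono z a) with hSdef
  have hS : 0 ≤ S := Finset.sum_nonneg fun a _ => mul_nonneg (hc a a.2).le (Complex.normSq_nonneg _)
  have hcont : Continuous fun y : Fin n → ℂ => normA H ((Dhat (fun _ => A) f z)⁻¹.mulVec y) := by
    unfold normA Matrix.mulVec dotProduct
    fun_prop
  obtain ⟨M, hM⟩ := (isCompact_closedBall (0 : Fin n → ℂ) (Real.sqrt S)).bddAbove_image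
    hcont.continuousOn
  refine ⟨M, fun df hdf => hM ⟨fun i => evalP (df i) z, ?_, rfl⟩⟩
  rw [mem_closedBall_zero_iff, pi_norm_le_iff_of_nonneg (Real.sqrt_nonneg _)]
  intro i
  apply Real.le_sqrt_of_sq_le
  rw [← Complex.normSq_eq_norm_sq]
  have h1 : ∑ i, nsq c (df i) ≤ 1 := Real.sqrt_le_one.1 hdf
  have h2 : nsq c (df i) ≤ 1 := 
    (Finset.single_le_sum (f := fun i => nsq c (df i)) (fun i _ => nsq_nonneg' hc (df i)) (Finset.mem_univ i)).trans h1
  calc Complex.normSq (evalP (df i) z) ≤ nsq c (df i) * S := eval_bound hc (df i) z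
    _ ≤ 1 * S := by gcongr
    _ = S := one_mul _

end SparseRandom

open SparseRandom

/-- **Condition Number Theorem, unmixed case.** If `A_1 = ⋯ = A_n = A` and
`C_1 = ⋯ = C_n = C`, with `Conv(A)` full-dimensional, and `z = exp(p+iq)` is a
nondegenerate root of `f` with `‖f^i‖_{C⁻¹} = 1` for all `i`, then
`1/d_ℙ(f,Σ_{(p,q)}) = sup_{‖ḟ‖≤1} ‖DG_f ḟ‖_A`. -/
theorem statement6 (n : ℕ) (hn : 1 ≤ n) (A : Finset (Fin n → ℤ))
    (hdim : affineSpan ℝ (coeA A) = ⊤)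
    (c : (Fin n → ℤ) → ℝ) (hc : ∀ a ∈ A, 0 < c a)
    (p q : Fin n → ℝ) (f : (i : Fin n) → ((fun _ : Fin n => A) i) → ℂ)
    (hroot : isRootAt (fun _ => A) f (zexp p q))
    (hnorm : ∀ i, nsq c (f i) = 1)
    (hnd : (Dhat (fun _ => A) f (zexp p q)).det ≠ 0) :
    1 / dPS (fun _ => c) f (SigmaPQ (fun _ => A) p q)
      = (⨆ df : {g : (i : Fin n) → ((fun _ : Fin n => A) i) → ℂ //
            normSys (fun _ => c) g ≤ 1},
          normA (HessA A c p) (DG (fun _ => A) f (zexp p q) df)) := by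
  have i0 : Fin n := ⟨0, hn⟩
  have hA : Nonempty A := by
    by_contra hA
    have : IsEmpty A := not_nonempty_iff.1 hA
    have h := hnorm i0
    simp [nsq] at h
  obtain ⟨M, hM⟩ := part_bdd A c hc (zexp p q) (HessA A c p) f
  set F : {g : (i : Fin n) → ((fun _ : Fin n => A) i) → ℂ //
            normSys (fun _ => c) g ≤ 1} → ℝ := fun df =>
          normA (HessA A c p) (DG (fun _ => A) f (zexp p q) df) with hF
  have hbdd : BddAbove (Set.range F) := ⟨M, by rintro _ ⟨df, rfl⟩; exact hM df.1 df.2⟩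
  have hlow : ∀ g ∈ SigmaPQ (fun _ => A) p q, 0 < (⨆ df, F df) ∧
      1 / (⨆ df, F df) ≤ dP (fun _ => c) f g := by
    intro g hg
    obtain ⟨df, h1, h2, h3⟩ := part_lower A hdim c hc p q f hroot hnorm hnd g hg
    have h4 : F ⟨df, h1⟩ ≤ ⨆ df, F df := le_ciSup hbdd ⟨df, h1⟩
    have h2' : 0 < F ⟨df, h1⟩ := h2
    exact ⟨h2'.trans_le h4, (one_div_le_one_div_of_le h2' h4).trans h3⟩
  have hzero : (fun _ _ => 0) ∈ SigmaPQ (fun _ : Fin n => A) p q := by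
    refine ⟨fun i => by simp [evalP], ?_⟩
    refine Matrix.det_eq_zero_of_row_eq_zero i0 fun j => ?_
    simp [jac]
  have hK : 0 < ⨆ df, F df := (hlow _ hzero).1
  have hd : 1 / (⨆ df, F df) ≤ dPS (fun _ => c) f (SigmaPQ (fun _ => A) p q) := by
    refine le_csInf ⟨_, _, hzero, rfl⟩ ?_
    rintro _ ⟨g, hg, rfl⟩
    exact (hlow g hg).2
  have hd0 : 0 < dPS (fun _ => c) f (SigmaPQ (fun _ => A) p q) :=
    (one_div_pos.2 hK).trans_le hd
  apply le_antisymm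
  · exact (one_div_le hK hd0).1 hd
  · have : Nonempty {g : (i : Fin n) → ((fun _ : Fin n => A) i) → ℂ //
            normSys (fun _ => c) g ≤ 1} := ⟨⟨fun _ _ => 0, by simp [normSys, nsq]⟩⟩
    refine ciSup_le fun df => ?_
    rcases le_or_gt (F df) 0 with h | h
    · exact h.trans (one_div_pos.2 hd0).le
    · obtain ⟨g, hg, hgd⟩ := part_upper A hdim c hc p q f hroot hnorm hnd df.1 df.2 h
      refine (le_one_div h hd0).2 (le_trans (csInf_le ⟨0, ?_⟩ ⟨g, hg, rfl⟩) hgd)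
      rintro _ ⟨g, _, rfl⟩
      exact Real.sqrt_nonneg _
end
end

section
/- Let A ⊂ ℝⁿ be a finite set whose convex hull has dimension n, let c_a > 0 for a ∈ A, and define g_A : ℝⁿ → ℝ by g_A(p) := ½·log(Σ_{a∈A} c_a·e^{2⟨a,p⟩}), so that ∇g_A(p) = Σ_{a∈A} a·c_a·e^{2⟨a,p⟩} / Σ_{a∈A} c_a·e^{2⟨a,p⟩}. Then the momentum map ∇g_A : ℝⁿ → ℝⁿ is injective, and its image is exactly the interior of the convex hull Conv(A). -/
open Finset

noncomputable section

namespace SparseRandom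

variable {n : ℕ}

/-- The momentum map `∇g_A(p) = (∑_a a·c_a·e^{2⟨a,p⟩}) / (∑_a c_a·e^{2⟨a,p⟩})` of the
Kähler potential `g_A(p) = ½·log(∑_{a∈A} c_a·e^{2⟨a,p⟩})`. -/
def mom (A : Finset (Fin n → ℝ)) (c : (Fin n → ℝ) → ℝ) (p : Fin n → ℝ) : Fin n → ℝ :=
  (∑ a : A, c (a : Fin n → ℝ) * Real.exp (2 * ∑ j, (a : Fin n → ℝ) j * p j))⁻¹ •
    ∑ a : A, (c (a : Fin n → ℝ) * Real.exp (2 * ∑ j, (a : Fin n → ℝ) j * p j)) •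
      (a : Fin n → ℝ)

end SparseRandom

namespace SparseRandom

/-- A linear functional that is constant on `A` is constant everywhere. -/
lemma const_of_const {n : ℕ} {A : Finset (Fin n → ℝ)}
    (hdim : affineSpan ℝ (A : Set (Fin n → ℝ)) = ⊤) (f : (Fin n → ℝ) →ₗ[ℝ] ℝ) (r : ℝ)
    (h : ∀ a ∈ A, f a = r) (x : Fin n → ℝ) : f x = r := by
  have hx : x ∈ affineSpan ℝ (A : Set (Fin n → ℝ)) := by rw [hdim]; trivial
  have hle : affineSpan ℝ (A : Set (Fin n → ℝ)) ≤
      (AffineSubspace.mk' r (⊥ : Submodule ℝ ℝ)).comap f.toAffineMap := by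
    rw [affineSpan_le]
    intro a ha
    simp [AffineSubspace.mem_mk', h a ha]
  have := hle hx
  simpa [AffineSubspace.mem_mk', sub_eq_zero] using this

/-- The weights. -/
def wt {n : ℕ} (c : (Fin n → ℝ) → ℝ) (p a : Fin n → ℝ) : ℝ :=
  c a * Real.exp (2 * (a ⬝ᵥ p))

lemma mom_eq {n : ℕ} (A : Finset (Fin n → ℝ)) (c : (Fin n → ℝ) → ℝ) (p : Fin n → ℝ) :
    mom A c p = (∑ a ∈ A, wt c p a)⁻¹ • ∑ a ∈ A, wt c p a • a := by
  rw [← Finset.sum_coe_sort A (fun a => wt c p a),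
    ← Finset.sum_coe_sort A (fun a => wt c p a • a)]
  rfl

lemma wt_pos {n : ℕ} {A : Finset (Fin n → ℝ)} {c : (Fin n → ℝ) → ℝ}
    (hc : ∀ a ∈ A, 0 < c a) (p : Fin n → ℝ) : ∀ a ∈ A, 0 < wt c p a :=
  fun a ha => mul_pos (hc a ha) (Real.exp_pos _)

lemma mom_iff {n : ℕ} {A : Finset (Fin n → ℝ)} (hA : A.Nonempty) {c : (Fin n → ℝ) → ℝ}
    (hc : ∀ a ∈ A, 0 < c a) (p m : Fin n → ℝ) :
    mom A c p = m ↔ ∑ a ∈ A, wt c p a • (a - m) = 0 := by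
  have hZ : (∑ a ∈ A, wt c p a) ≠ 0 := (Finset.sum_pos (wt_pos hc p) hA).ne'
  rw [mom_eq, inv_smul_eq_iff₀ hZ]
  simp only [smul_sub, Finset.sum_sub_distrib, ← Finset.sum_smul]
  rw [sub_eq_zero]

lemma sum_map {n : ℕ} {A : Finset (Fin n → ℝ)} {w : (Fin n → ℝ) → ℝ} {m : Fin n → ℝ}
    (h : ∑ a ∈ A, w a • (a - m) = 0) (f : (Fin n → ℝ) →ₗ[ℝ] ℝ) :
    ∑ a ∈ A, w a * (f a - f m) = 0 := by
  have := congrArg f h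
  simpa [map_sum] using this

lemma exp_mono_mul (x y : ℝ) (hxy : x ≠ y) :
    0 < (Real.exp (2 * x) - Real.exp (2 * y)) * (x - y) := by
  rcases lt_or_gt_of_ne hxy with h | h
  · have : Real.exp (2 * x) < Real.exp (2 * y) := Real.exp_lt_exp.2 (by linarith)
    exact mul_pos_of_neg_of_neg (by linarith) (by linarith)
  · have : Real.exp (2 * y) < Real.exp (2 * x) := Real.exp_lt_exp.2 (by linarith)
    exact mul_pos (by linarith) (by linarith)

/-- Pairing with a fixed vector. -/
def pair {n : ℕ} (d : Fin n → ℝ) : (Fin n → ℝ) →ₗ[ℝ] ℝ where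
  toFun a := a ⬝ᵥ d
  map_add' a b := add_dotProduct a b d
  map_smul' r a := by simp [smul_dotProduct]

lemma pair_apply {n : ℕ} (d a : Fin n → ℝ) : pair d a = a ⬝ᵥ d := rfl

lemma mom_inj {n : ℕ} {A : Finset (Fin n → ℝ)} (hA : A.Nonempty)
    (hdim : affineSpan ℝ (A : Set (Fin n → ℝ)) = ⊤)
    {c : (Fin n → ℝ) → ℝ} (hc : ∀ a ∈ A, 0 < c a) : Function.Injective (mom A c) := by
  intro p q hpq
  obtain ⟨m, hm⟩ : ∃ m, mom A c q = m := ⟨_, rfl⟩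
  rw [hm] at hpq
  have hp := sum_map ((mom_iff hA hc p m).1 hpq) (pair (q - p))
  have hq := sum_map ((mom_iff hA hc q m).1 hm) (pair (q - p))
  set f := pair (q - p) with hf
  have hw : ∀ a, wt c q a = wt c p a * Real.exp (2 * f a) := by
    intro a
    rw [wt, wt, mul_assoc, ← Real.exp_add, hf, pair_apply, dotProduct_sub]
    congr 2; ring
  have h0 : ∑ a ∈ A, wt c p a * ((Real.exp (2 * f a) - Real.exp (2 * f m)) * (f a - f m)) = 0 := by
    have : ∑ a ∈ A, wt c p a * ((Real.exp (2 * f a) - Real.exp (2 * f m)) * (f a - f m))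
        = ∑ a ∈ A, wt c q a * (f a - f m)
          - Real.exp (2 * f m) * ∑ a ∈ A, wt c p a * (f a - f m) := by
      rw [Finset.mul_sum, ← Finset.sum_sub_distrib]
      refine Finset.sum_congr rfl fun a _ => ?_
      rw [hw]; ring
    rw [this, hp, hq]; simp
  have hall : ∀ a ∈ A, f a = f m := by
    intro a ha
    have hnn : ∀ a ∈ A,
        0 ≤ wt c p a * ((Real.exp (2 * f a) - Real.exp (2 * f m)) * (f a - f m)) := by
      intro a ha
      refine mul_nonneg (wt_pos hc p a ha).le ?_
      by_cases h : f a = f m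
      · simp [h]
      · exact (exp_mono_mul _ _ h).le
    have hz := (Finset.sum_eq_zero_iff_of_nonneg hnn).1 h0 a ha
    by_contra h
    exact (mul_pos (wt_pos hc p a ha) (exp_mono_mul _ _ h)).ne' hz
  have h1 := const_of_const hdim f _ hall
  have h2 : f (q - p) = 0 := by rw [h1, ← h1 0, map_zero]
  rw [hf, pair_apply, dotProduct_self_eq_zero, sub_eq_zero] at h2
  exact h2.symm

lemma mom_mem {n : ℕ} {A : Finset (Fin n → ℝ)} (hA : A.Nonempty)
    (hdim : affineSpan ℝ (A : Set (Fin n → ℝ)) = ⊤)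
    {c : (Fin n → ℝ) → ℝ} (hc : ∀ a ∈ A, 0 < c a) (p : Fin n → ℝ) :
    mom A c p ∈ interior (convexHull ℝ (A : Set (Fin n → ℝ))) := by
  by_contra hmem
  have hs := (mom_iff hA hc p _).1 rfl
  set m := mom A c p
  have hcv := convex_convexHull ℝ (A : Set (Fin n → ℝ))
  obtain ⟨f, hf⟩ := geometric_hahn_banach_open_point hcv.interior isOpen_interior hmem
  have hne : (interior (convexHull ℝ (A : Set (Fin n → ℝ)))).Nonempty :=
    interior_convexHull_nonempty_iff_affineSpan_eq_top.2 hdim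
  have hle : ∀ a ∈ A, f a ≤ f m := by
    intro a ha
    have h1 : a ∈ closure (interior (convexHull ℝ (A : Set (Fin n → ℝ)))) := by
      rw [hcv.closure_interior_eq_closure_of_nonempty_interior hne]
      exact subset_closure (subset_convexHull ℝ _ ha)
    have h2 : closure (interior (convexHull ℝ (A : Set (Fin n → ℝ)))) ⊆ {x | f x ≤ f m} :=
      closure_minimal (fun x hx => (hf x hx).le) (isClosed_le f.continuous continuous_const)
    exact h2 h1
  have h0 := sum_map hs f.toLinearMap
  have hall : ∀ a ∈ A, f.toLinearMap a = f m := by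
    intro a ha
    have hz := (Finset.sum_eq_zero_iff_of_nonpos (fun a ha =>
      mul_nonpos_of_nonneg_of_nonpos (wt_pos hc p a ha).le (sub_nonpos.2 (hle a ha)))).1 h0 a ha
    rcases mul_eq_zero.1 hz with h | h
    · exact absurd h (wt_pos hc p a ha).ne'
    · exact sub_eq_zero.1 h
  obtain ⟨x, hx⟩ := hne
  exact (hf x hx).ne (const_of_const hdim _ _ hall x)

lemma exists_ge {n : ℕ} {A : Finset (Fin n → ℝ)} {y : Fin n → ℝ}
    (hy : y ∈ interior (convexHull ℝ (A : Set (Fin n → ℝ)))) :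
    ∃ r > 0, ∀ p : Fin n → ℝ, ∃ a ∈ A, r * ‖p‖ ≤ (a - y) ⬝ᵥ p := by
  obtain ⟨ε, hε, hball⟩ := Metric.isOpen_iff.1 isOpen_interior y hy
  -- every point of the ball is dominated by a vertex
  have key : ∀ p x : Fin n → ℝ, x ∈ Metric.ball y ε → ∃ a ∈ A, x ⬝ᵥ p ≤ a ⬝ᵥ p := by
    intro p x hx
    by_contra! h
    have h1 : convexHull ℝ (A : Set (Fin n → ℝ)) ⊆ {z | pair p z < x ⬝ᵥ p} :=
      convexHull_min (fun a ha => h a ha) (convex_halfSpace_lt (pair p).isLinear _)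
    exact lt_irrefl (x ⬝ᵥ p) (h1 (interior_subset (hball hx)))
  refine ⟨ε / 2, half_pos hε, fun p => ?_⟩
  rcases isEmpty_or_nonempty (Fin n) with hn | hn
  · obtain ⟨a, ha, -⟩ := key p y (Metric.mem_ball_self hε)
    refine ⟨a, ha, ?_⟩
    have : p = 0 := Subsingleton.elim _ _
    simp [this]
  · obtain ⟨j, hj⟩ := Finite.exists_max (fun i => ‖p i‖)
    have hnorm : ‖p‖ ≤ |p j| := (pi_norm_le_iff_of_nonneg (norm_nonneg _)).2 hj
    obtain ⟨s, hs, hsp⟩ : ∃ s : ℝ, |s| ≤ 1 ∧ s * p j = |p j| := by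
      rcases le_total 0 (p j) with h | h
      · exact ⟨1, by simp, by rw [abs_of_nonneg h, one_mul]⟩
      · exact ⟨-1, by simp, by rw [abs_of_nonpos h]; ring⟩
    obtain ⟨a, ha, hle⟩ := key p (y + Pi.single j (ε / 2 * s)) (by
      rw [mem_ball_iff_norm, add_sub_cancel_left, Pi.norm_single, Real.norm_eq_abs, abs_mul,
        abs_of_pos (half_pos hε)]
      nlinarith)
    refine ⟨a, ha, ?_⟩
    rw [add_dotProduct, single_dotProduct, mul_assoc, hsp] at hle
    rw [sub_dotProduct]
    have := mul_le_mul_of_nonneg_left hnorm (half_pos hε).le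
    linarith

lemma exists_mom {n : ℕ} {A : Finset (Fin n → ℝ)} (hA : A.Nonempty)
    {c : (Fin n → ℝ) → ℝ} (hc : ∀ a ∈ A, 0 < c a) {y : Fin n → ℝ}
    (hy : y ∈ interior (convexHull ℝ (A : Set (Fin n → ℝ)))) : ∃ p, mom A c p = y := by
  obtain ⟨r, hr, hge⟩ := exists_ge hy
  obtain ⟨b, hb, hmin⟩ := A.exists_min_image c hA
  let h : (Fin n → ℝ) → ℝ := fun p => ∑ a ∈ A, c a * Real.exp (2 * ((a - y) ⬝ᵥ p))
  have hcont : Continuous h := by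
    unfold h dotProduct
    fun_prop
  have hbound : ∀ p, c b * r * ‖p‖ ≤ h p := by
    intro p
    obtain ⟨a, ha, hap⟩ := hge p
    have h1 : c a * Real.exp (2 * ((a - y) ⬝ᵥ p)) ≤ h p :=
      Finset.single_le_sum (f := fun a => c a * Real.exp (2 * ((a - y) ⬝ᵥ p)))
        (fun a ha => (mul_pos (hc a ha) (Real.exp_pos _)).le) ha
    have h2 := Real.add_one_le_exp (2 * ((a - y) ⬝ᵥ p))
    have h0 : 0 ≤ r * ‖p‖ := by positivity
    have h3 : r * ‖p‖ ≤ Real.exp (2 * ((a - y) ⬝ᵥ p)) := by linarith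
    have h4 := mul_le_mul (hmin a ha) h3 h0 (hc a ha).le
    linarith
  have hlim : Filter.Tendsto h (Filter.cocompact _) Filter.atTop :=
    Filter.tendsto_atTop_mono hbound
      ((tendsto_norm_cocompact_atTop).const_mul_atTop (mul_pos (hc b hb) hr))
  obtain ⟨p, hp⟩ := hcont.exists_forall_le hlim
  refine ⟨p, (mom_iff hA hc p y).2 ?_⟩
  -- derivative in each coordinate direction
  have hder : ∀ j, ∑ a ∈ A, c a * (Real.exp (2 * ((a - y) ⬝ᵥ p)) * (2 * (a j - y j))) = 0 := by
    intro j
    have hd : HasDerivAt (fun t : ℝ => ∑ a ∈ A,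
        c a * Real.exp (2 * ((a - y) ⬝ᵥ p) + t * (2 * (a j - y j))))
        (∑ a ∈ A, c a * (Real.exp (2 * ((a - y) ⬝ᵥ p)) * (2 * (a j - y j)))) 0 := by
      refine HasDerivAt.fun_sum fun a _ => ?_
      have h1 : HasDerivAt (fun t : ℝ => 2 * ((a - y) ⬝ᵥ p) + t * (2 * (a j - y j)))
          (2 * (a j - y j)) 0 := by
        simpa using ((hasDerivAt_id (0 : ℝ)).mul_const (2 * (a j - y j))).const_add
          (2 * ((a - y) ⬝ᵥ p))
      simpa using h1.exp.const_mul (c a)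
    refine IsLocalMin.hasDerivAt_eq_zero (Filter.Eventually.of_forall fun t => ?_) hd
    have := hp (p + Pi.single j t)
    simp only [h, dotProduct_add, dotProduct_single] at this
    simp only [zero_mul, add_zero]
    refine this.trans_eq (Finset.sum_congr rfl fun a _ => ?_)
    congr 2
    simp only [Pi.sub_apply]; ring
  ext j
  have hw : ∀ a, wt c p a = Real.exp (2 * (y ⬝ᵥ p)) * (c a * Real.exp (2 * ((a - y) ⬝ᵥ p))) := by
    intro a
    rw [wt, mul_left_comm, ← Real.exp_add, sub_dotProduct]
    congr 2; ring
  have : (∑ a ∈ A, wt c p a • (a - y)) j = Real.exp (2 * (y ⬝ᵥ p)) / 2 *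
      ∑ a ∈ A, c a * (Real.exp (2 * ((a - y) ⬝ᵥ p)) * (2 * (a j - y j))) := by
    rw [Finset.sum_apply, Finset.mul_sum]
    refine Finset.sum_congr rfl fun a _ => ?_
    rw [Pi.smul_apply, hw, smul_eq_mul, Pi.sub_apply]; ring
  rw [this, hder j]; simp

end SparseRandom

open SparseRandom

/-- If `A ⊂ ℝⁿ` is finite with full-dimensional convex hull and all
weights `c_a` positive, then the momentum map `∇g_A` is injective and its image is
exactly the interior of `Conv(A)`. -/
theorem statement10 (n : ℕ) (A : Finset (Fin n → ℝ))
    (hdim : affineSpan ℝ (A : Set (Fin n → ℝ)) = ⊤)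
    (c : (Fin n → ℝ) → ℝ) (hc : ∀ a ∈ A, 0 < c a) :
    Function.Injective (mom A c) ∧
      Set.range (mom A c) = interior (convexHull ℝ (A : Set (Fin n → ℝ))) := by
  have hA : A.Nonempty := by
    rw [← Finset.coe_nonempty, ← affineSpan_nonempty (k := ℝ), hdim]
    exact ⟨0, trivial⟩
  refine ⟨mom_inj hA hdim hc, Set.Subset.antisymm ?_ fun y hy => exists_mom hA hc hy⟩
  rintro _ ⟨p, rfl⟩
  exact mom_mem hA hdim hc p
end
end
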